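/- The endomorphism 𝒞_{m,n} = ℒ_m + ℛ_n − 𝒜_{m,n} + Nn of V^{m,n} coincides with the action on V^{m,n} of the Casimir element (1/2)(Eⁱ_j Eʲ_i + N Eⁱ_i) of U(𝔤𝔩_N), where 𝔤𝔩_N acts on V^{m,n} as a derivation via E^i_j(e_k) = −e_j δ^i_k and E^i_j(e^k) = δ_j^k e^i; in particular 𝒞_{m,n} lies in the center of the centralizer algebra C_{m,n}(N). -/

import Mathlib

open scoped BigOperators

noncomputable section

/-- Mixed tensors of valence (m,n) on an N-dimensional space, given by components. -/
abbrev Tens (N m n : ℕ) := (Fin m → Fin N) → (Fin n → Fin N) → ℂ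

namespace Mixed

variable (N : ℕ)

/-- Permutation of the contravariant (V) factors. -/
def permU (m n : ℕ) (p : Equiv.Perm (Fin m)) : Module.End ℂ (Tens N m n) where
  toFun t := fun i j => t (i ∘ p) j
  map_add' t s := rfl
  map_smul' c t := rfl

/-- Permutation of the covariant (V*) factors. -/
def permD (m n : ℕ) (q : Equiv.Perm (Fin n)) : Module.End ℂ (Tens N m n) where
  toFun t := fun i j => t i (j ∘ q)
  map_add' t s := rfl
  map_smul' c t := rfl

/-- The contraction map `tr_{ab'}` (the result, a tensor of valence (m−1,n−1), is
recorded as a function not depending on the slots a, b). -/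
def ctr (m n : ℕ) (a : Fin m) (b : Fin n) : Tens N m n →ₗ[ℂ] Tens N m n where
  toFun t := fun i j => ∑ k : Fin N,
    t (Function.update i a k) (Function.update j b k)
  map_add' t s := by funext i j; simp [Finset.sum_add_distrib]
  map_smul' c t := by funext i j; simp [Finset.mul_sum]

/-- The contraction-insertion endomorphism `τ_{ab'} = tr⁺_{ab'} ∘ tr_{ab'}`. -/
def tauC (m n : ℕ) (a : Fin m) (b : Fin n) : Module.End ℂ (Tens N m n) where
  toFun t := fun i j =>
    if i a = j b then
      ∑ k : Fin N, t (Function.update i a k) (Function.update j b k)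
    else 0
  map_add' t s := by
    funext i j; by_cases h : i a = j b <;> simp [h, Finset.sum_add_distrib]
  map_smul' c t := by
    funext i j; by_cases h : i a = j b <;> simp [h, Finset.mul_sum]

/-- `𝒜_{m,n} = ∑_{a,b'} τ_{ab'}`. -/
def A (m n : ℕ) : Module.End ℂ (Tens N m n) :=
  ∑ a : Fin m, ∑ b : Fin n, tauC N m n a b

/-- The traceless subspace: common kernel of all contractions. -/
def traceless0 (m n : ℕ) : Submodule ℂ (Tens N m n) :=
  ⨅ a : Fin m, ⨅ b : Fin n, LinearMap.ker (ctr N m n a b)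

/-- `ℒ_m`: the sum of the transpositions of the V-factors. -/
def LOp (m n : ℕ) : Module.End ℂ (Tens N m n) :=
  ∑ x ∈ Finset.univ.filter (fun x : Fin m × Fin m => x.1 < x.2),
    permU N m n (Equiv.swap x.1 x.2)

/-- `ℛ_n`: the sum of the transpositions of the V*-factors. -/
def ROp (m n : ℕ) : Module.End ℂ (Tens N m n) :=
  ∑ x ∈ Finset.univ.filter (fun x : Fin n × Fin n => x.1 < x.2),
    permD N m n (Equiv.swap x.1 x.2)

/-- The (diagonal) action of GL(N) on mixed tensors: the contragredient action on
the covariant indices. -/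
def glAct (m n : ℕ) (g : GL (Fin N) ℂ) : Module.End ℂ (Tens N m n) where
  toFun t := fun i j => ∑ i' : Fin m → Fin N, ∑ j' : Fin n → Fin N,
    ((∏ a : Fin m, (g : Matrix (Fin N) (Fin N) ℂ) (i a) (i' a)) *
      ∏ b : Fin n, ((g⁻¹ : GL (Fin N) ℂ) : Matrix (Fin N) (Fin N) ℂ) (j' b) (j b)) *
        t i' j'
  map_add' t s := by
    funext i j
    simp only [Pi.add_apply, mul_add, Finset.sum_add_distrib]
  map_smul' c t := by
    funext i j
    simp only [Pi.smul_apply, smul_eq_mul, RingHom.id_apply, Finset.mul_sum]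
    refine Finset.sum_congr rfl fun i' _ => Finset.sum_congr rfl fun j' _ => by ring

/-- The centraliser algebra `C_{m,n}(N) = End_{GL(N)}(V^{m,n})`. -/
def Cent (m n : ℕ) : Subalgebra ℂ (Module.End ℂ (Tens N m n)) :=
  Subalgebra.centralizer ℂ (Set.range (glAct N m n))

end Mixed

namespace Mixed

/-- The action of the matrix unit E^i_j ∈ 𝔤𝔩_N on the s-th contravariant slot,
for the convention E^i_j(e_k) = −e_j δ^i_k. -/
def EactU (N m n : ℕ) (i j : Fin N) (s : Fin m) : Module.End ℂ (Tens N m n) where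
  toFun t := fun a b => if a s = j then -t (Function.update a s i) b else 0
  map_add' t u := by funext a b; by_cases h : a s = j <;> simp [h]; ring
  map_smul' c t := by funext a b; by_cases h : a s = j <;> simp [h]

/-- The action of the matrix unit E^i_j ∈ 𝔤𝔩_N on the s-th covariant slot,
for the convention E^i_j(e^k) = δ_j^k e^i. -/
def EactD (N m n : ℕ) (i j : Fin N) (s : Fin n) : Module.End ℂ (Tens N m n) where
  toFun t := fun a b => if b s = i then t a (Function.update b s j) else 0
  map_add' t u := by funext a b; by_cases h : b s = i <;> simp [h]
  map_smul' c t := by funext a b; by_cases h : b s = i <;> simp [h]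

/-- The derivation action of E^i_j ∈ 𝔤𝔩_N on the mixed tensor product V^{m,n}. -/
def Eact (N m n : ℕ) (i j : Fin N) : Module.End ℂ (Tens N m n) :=
  (∑ s : Fin m, EactU N m n i j s) + ∑ s : Fin n, EactD N m n i j s

/-- The action on V^{m,n} of the Casimir element (1/2)(Eⁱ_j Eʲ_i + N Eⁱ_i)
of U(𝔤𝔩_N). -/
def casimir (N m n : ℕ) : Module.End ℂ (Tens N m n) :=
  (2 : ℂ)⁻¹ • ((∑ i : Fin N, ∑ j : Fin N, Eact N m n i j * Eact N m n j i)
    + (N : ℂ) • ∑ i : Fin N, Eact N m n i i)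

end Mixed

/-!
A mixed tensor is a matrix whose rows are contravariant and whose columns are covariant
multi-indices. `GL(N)` acts by left multiplication with the Kronecker power of `g` and right
multiplication with that of `g⁻¹`, and `𝔤𝔩_N` by left minus right multiplication with Kronecker
sums. Expanding `∑ E_ij E_ji` over pairs of tensor factors, two equal factors contribute the scalar
`N`, two different factors of the same kind a transposition, and factors of opposite kinds a
contraction-insertion, which is the formula for `𝒞_{m,n}`.

The Casimir operator commutes with `GL(N)` because `∑ E_ij ⊗ E_ji` is invariant under conjugation
by `g ⊗ g`. An endomorphism commuting with `GL(N)` commutes with `𝔤𝔩_N`, as one sees by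
differentiating the action of `exp (τ X)` at `τ = 0`, hence with the Casimir operator.
-/

namespace Mixed

open Function Matrix
open scoped TensorProduct

lemma sum_sum_eq_sum_diag_add_sum_lt {ι M : Type*} [Fintype ι] [LinearOrder ι] [AddCommMonoid M]
    (F : ι → ι → M) :
    ∑ s, ∑ r, F s r =
      ∑ s, F s s + ∑ x : ι × ι with x.1 < x.2, (F x.1 x.2 + F x.2 x.1) := by
  have split_trichotomy (s r : ι) : F s r =
      (if s = r then F s r else 0) + ((if s < r then F s r else 0) +
        if r < s then F s r else 0) := by
    rcases lt_trichotomy s r with h | rfl | h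
    · simp [h, h.ne, h.not_gt]
    · simp
    · simp [h, h.ne', h.not_gt]
  have sum_gt : ∑ s, ∑ r, (if r < s then F s r else 0) = ∑ s, ∑ r, if s < r then F r s else 0 :=
    Finset.sum_comm
  calc ∑ s, ∑ r, F s r
      = ∑ s, ∑ r, ((if s = r then F s r else 0) + ((if s < r then F s r else 0) +
          if r < s then F s r else 0)) :=
        Finset.sum_congr rfl fun s _ => Finset.sum_congr rfl fun r _ => split_trichotomy s r
    _ = _ := by
        simp only [Finset.sum_add_distrib, sum_gt]
        simp [Finset.sum_filter, Fintype.sum_prod_type]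

lemma sum_sum_sum_sum_comm {α β γ δ M : Type*} [Fintype α] [Fintype β] [Fintype γ] [Fintype δ]
    [AddCommMonoid M] (F : α → β → γ → δ → M) :
    ∑ a, ∑ b, ∑ c, ∑ d, F a b c d = ∑ c, ∑ d, ∑ a, ∑ b, F a b c d := by
  simpa only [Fintype.sum_prod_type] using Finset.sum_comm (s := Finset.univ) (t := Finset.univ)
    (f := fun (p : α × β) (q : γ × δ) => F p.1 p.2 q.1 q.2)

lemma single_mul_single {l m n R : Type*} [DecidableEq l] [DecidableEq m] [DecidableEq n]
    [Fintype m] [NonUnitalNonAssocSemiring R] (i : l) (j k : m) (p : n) (c d : R) :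
    single i j c * single k p d = if j = k then single i p (c * d) else 0 := by
  split_ifs with h
  · rw [h, single_mul_single_same]
  · exact single_mul_single_of_ne c i j k h d

section CasimirTensor

variable (κ R : Type*) [Fintype κ] [DecidableEq κ] [CommSemiring R]

/-- The split Casimir tensor `∑ E_ij ⊗ E_ji` of the matrix algebra: the quadratic part of the
Casimir element of `𝔤𝔩`, before it is multiplied out in a representation. -/
def casimirTensor : Matrix κ κ R ⊗[R] Matrix κ κ R :=
  ∑ i, ∑ j, single i j 1 ⊗ₜ single j i 1

variable {κ R}

lemma tmul_one_mul_casimirTensor (g : Matrix κ κ R) :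
    (g ⊗ₜ[R] (1 : Matrix κ κ R)) * casimirTensor κ R = casimirTensor κ R * (1 ⊗ₜ[R] g) := by
  induction g using Matrix.induction_on' with
  | h_zero => simp
  | h_add g h hg hh => rw [TensorProduct.add_tmul, TensorProduct.tmul_add, add_mul, mul_add, hg, hh]
  | h_std_basis a b c =>
    have single_tmul_single (k : κ) :
        single a k c ⊗ₜ[R] single k b 1 = single a k 1 ⊗ₜ[R] single k b c := by
      simpa [smul_single] using TensorProduct.smul_tmul c (single a k (1 : R)) (single k b (1 : R))
    simp [casimirTensor, Finset.mul_sum, Finset.sum_mul, single_mul_single, single_tmul_single,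
      TensorProduct.ite_tmul, TensorProduct.tmul_ite, Finset.sum_ite_irrel]

lemma one_tmul_mul_casimirTensor (g : Matrix κ κ R) :
    ((1 : Matrix κ κ R) ⊗ₜ[R] g) * casimirTensor κ R = casimirTensor κ R * (g ⊗ₜ[R] 1) := by
  have comm_casimirTensor : Algebra.TensorProduct.comm R (Matrix κ κ R) (Matrix κ κ R)
      (casimirTensor κ R) = casimirTensor κ R := by
    simp only [casimirTensor, map_sum, Algebra.TensorProduct.comm_tmul]
    exact Finset.sum_comm
  have h := congrArg (Algebra.TensorProduct.comm R (Matrix κ κ R) (Matrix κ κ R))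
    (tmul_one_mul_casimirTensor g)
  simpa only [map_mul, Algebra.TensorProduct.comm_tmul, comm_casimirTensor] using h

lemma casimirTensor_conj {g h : Matrix κ κ R} (hgh : g * h = 1) :
    (g ⊗ₜ[R] g) * casimirTensor κ R * (h ⊗ₜ[R] h) = casimirTensor κ R :=
  calc (g ⊗ₜ[R] g) * casimirTensor κ R * (h ⊗ₜ[R] h)
      = (g ⊗ₜ[R] 1) * ((1 ⊗ₜ[R] g) * casimirTensor κ R) * (h ⊗ₜ[R] h) := by
        simp [← mul_assoc]
    _ = (casimirTensor κ R * (1 ⊗ₜ[R] g)) * (g ⊗ₜ[R] 1) * (h ⊗ₜ[R] h) := by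
        rw [one_tmul_mul_casimirTensor, ← mul_assoc, tmul_one_mul_casimirTensor]
    _ = casimirTensor κ R := by
        simp [mul_assoc, hgh, ← Algebra.TensorProduct.one_def]

lemma sum_bilin_conj_single {M : Type*} [AddCommMonoid M] [Module R M]
    (B : Matrix κ κ R →ₗ[R] Matrix κ κ R →ₗ[R] M) {g h : Matrix κ κ R} (hgh : g * h = 1) :
    ∑ i, ∑ j, B (g * single i j 1 * h) (g * single j i 1 * h) =
      ∑ i, ∑ j, B (single i j 1) (single j i 1) := by
  simpa [casimirTensor, Finset.mul_sum, Finset.sum_mul] using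
    congrArg (TensorProduct.lift B) (casimirTensor_conj hgh)

end CasimirTensor

section Kronecker

variable {ι κ R : Type*} [Fintype ι] [CommSemiring R]

/-- The Kronecker product of a family of square matrices, that is, the matrix of `⨂ M s` with
rows and columns labelled by multi-indices. -/
def piKronecker (M : ι → Matrix κ κ R) : Matrix (ι → κ) (ι → κ) R :=
  .of fun x y => ∏ s, M s (x s) (y s)

lemma piKronecker_mul [DecidableEq ι] [Fintype κ] (M P : ι → Matrix κ κ R) :
    piKronecker M * piKronecker P = piKronecker (M * P) := by
  ext x y
  simp [piKronecker, Matrix.mul_apply, Finset.prod_univ_sum, Finset.prod_mul_distrib]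

lemma piKronecker_one [DecidableEq κ] :
    piKronecker (1 : ι → Matrix κ κ R) = 1 := by
  ext x y
  simp [piKronecker, Matrix.one_apply, Finset.prod_ite_zero, funext_iff]

variable (ι) in
/-- The Kronecker power `X ↦ X ⊗ ⋯ ⊗ X`. -/
def kroneckerPow (X : Matrix κ κ R) : Matrix (ι → κ) (ι → κ) R :=
  piKronecker fun _ => X

lemma kroneckerPow_one [DecidableEq κ] : kroneckerPow ι (1 : Matrix κ κ R) = 1 :=
  piKronecker_one

variable [DecidableEq ι] [DecidableEq κ]

lemma piKronecker_mulSingle_apply (s : ι) (X : Matrix κ κ R) (x y : ι → κ) :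
    piKronecker (Pi.mulSingle s X) x y =
      X (x s) (y s) * ∏ r ∈ Finset.univ.erase s, (1 : Matrix κ κ R) (x r) (y r) := by
  rw [piKronecker, of_apply, ← Finset.mul_prod_erase _ _ (Finset.mem_univ s), Pi.mulSingle_eq_same]
  congr 1
  exact Finset.prod_congr rfl fun r hr => by
    rw [Pi.mulSingle_eq_of_ne (Finset.ne_of_mem_erase hr)]

/-- The action `1 ⊗ ⋯ ⊗ X ⊗ ⋯ ⊗ 1` of a matrix on the `s`-th tensor factor. -/
def slot (s : ι) : Matrix κ κ R →ₗ[R] Matrix (ι → κ) (ι → κ) R where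
  toFun X := piKronecker (Pi.mulSingle s X)
  map_add' X Y := by ext x y; simp [piKronecker_mulSingle_apply, add_mul]
  map_smul' c X := by ext x y; simp [piKronecker_mulSingle_apply, mul_assoc]

lemma slot_apply (s : ι) (X : Matrix κ κ R) :
    slot s X = piKronecker (Pi.mulSingle s X) := rfl

lemma slot_one (s : ι) : slot s (1 : Matrix κ κ R) = 1 := by
  rw [slot_apply, Pi.mulSingle_one, piKronecker_one]

lemma slot_single_apply (s : ι) (i j : κ) (x y : ι → κ) :
    slot s (single i j (1 : R)) x y = if x s = i ∧ update x s j = y then 1 else 0 := by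
  have update_eq : update x s j = y ↔ j = y s ∧ ∀ r ∈ Finset.univ.erase s, x r = y r := by
    simp [update_eq_iff]
  simp only [slot_apply, piKronecker_mulSingle_apply, single_apply, Matrix.one_apply,
    Finset.prod_ite_zero, Finset.prod_const_one, update_eq, eq_comm (a := i)]
  simp only [← and_assoc, ite_and, ite_mul, one_mul, zero_mul]

variable (ι) in
/-- The Kronecker sum `∑ 1 ⊗ ⋯ ⊗ X ⊗ ⋯ ⊗ 1`, the derivation by which `X ∈ 𝔤𝔩` acts on a tensor
power. -/
def kroneckerSum : Matrix κ κ R →ₗ[R] Matrix (ι → κ) (ι → κ) R :=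
  ∑ s, slot s

lemma kroneckerSum_apply (X : Matrix κ κ R) : kroneckerSum ι X = ∑ s, slot s X := by
  simp [kroneckerSum]

lemma kroneckerSum_one :
    kroneckerSum ι (1 : Matrix κ κ R) = (Fintype.card ι : R) • 1 := by
  simp [kroneckerSum_apply, slot_one, Nat.cast_smul_eq_nsmul]

variable [Fintype κ]

lemma kroneckerPow_mul_slot {g X Y : Matrix κ κ R} (h : g * X = Y * g) (s : ι) :
    kroneckerPow ι g * slot s X = slot s Y * kroneckerPow ι g := by
  have mul_mulSingle : (fun _ => g) * Pi.mulSingle s X = Pi.mulSingle s Y * (fun _ : ι => g) := by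
    ext1 r
    obtain rfl | hr := eq_or_ne r s <;> simp [*]
  rw [slot_apply, slot_apply, kroneckerPow, piKronecker_mul, mul_mulSingle, piKronecker_mul]

lemma slot_single_mul_apply {α : Type*} (s : ι) (i j : κ) (t : Matrix (ι → κ) α R)
    (x : ι → κ) (b : α) :
    (slot s (single i j (1 : R)) * t) x b = if x s = i then t (update x s j) b else 0 := by
  simp [Matrix.mul_apply, slot_single_apply, ite_and]

lemma mul_slot_single_apply {α : Type*} (s : ι) (i j : κ) (t : Matrix α (ι → κ) R)
    (a : α) (y : ι → κ) :
    (t * slot s (single i j (1 : R))) a y = if y s = j then t a (update y s i) else 0 := by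
  have update_eq_comm (x : ι → κ) :
      x s = i ∧ update x s j = y ↔ y s = j ∧ update y s i = x := by
    constructor <;> rintro ⟨rfl, rfl⟩ <;> simp
  simp [Matrix.mul_apply, slot_single_apply, update_eq_comm, ite_and]

/-- The permutation matrix exchanging the tensor factors `s` and `r`. -/
def swapMatrix (s r : ι) : Matrix (ι → κ) (ι → κ) R :=
  (1 : Matrix (ι → κ) (ι → κ) R).submatrix (· ∘ Equiv.swap s r) id

lemma sum_slot_single_mul_slot_single_self (s : ι) :
    ∑ i, ∑ j, slot s (single i j 1) * slot s (single j i 1) =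
      (Fintype.card κ : R) • (1 : Matrix (ι → κ) (ι → κ) R) := by
  ext x y
  simp [Matrix.sum_apply, slot_single_mul_apply, slot_single_apply, Matrix.one_apply]

lemma sum_slot_single_mul_slot_single {s r : ι} (h : s ≠ r) :
    ∑ i, ∑ j, slot s (single i j 1) * slot r (single j i 1) =
      (swapMatrix s r : Matrix (ι → κ) (ι → κ) R) := by
  ext x y
  simp [Matrix.sum_apply, slot_single_mul_apply, slot_single_apply, swapMatrix, Matrix.one_apply,
    Equiv.swap_comm s r, Equiv.comp_swap_eq_update, h.symm, ite_and]

lemma kroneckerPow_mul_kroneckerSum {g X Y : Matrix κ κ R} (h : g * X = Y * g) :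
    kroneckerPow ι g * kroneckerSum ι X = kroneckerSum ι Y * kroneckerPow ι g := by
  simp only [kroneckerSum_apply, Finset.mul_sum, Finset.sum_mul, kroneckerPow_mul_slot h]

end Kronecker

lemma sum_kroneckerSum_single_mul {ι κ R : Type*} [Fintype ι] [LinearOrder ι] [Fintype κ]
    [DecidableEq κ] [CommSemiring R] :
    ∑ i, ∑ j, kroneckerSum ι (single i j (1 : R)) * kroneckerSum ι (single j i 1) =
      (Fintype.card κ * Fintype.card ι : R) • (1 : Matrix (ι → κ) (ι → κ) R) +
        (2 : R) • ∑ x : ι × ι with x.1 < x.2, swapMatrix x.1 x.2 := by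
  have expand : ∑ i : κ, ∑ j : κ,
      kroneckerSum ι (single i j (1 : R)) * kroneckerSum ι (single j i 1) =
        ∑ s, ∑ r, ∑ i, ∑ j, slot s (single i j 1) * slot r (single j i 1) := by
    simp only [kroneckerSum_apply, Finset.sum_mul_sum]
    exact sum_sum_sum_sum_comm _
  rw [expand, sum_sum_eq_sum_diag_add_sum_lt, Finset.smul_sum]
  congr 1
  · simp [sum_slot_single_mul_slot_single_self, mul_smul, Nat.cast_smul_eq_nsmul,
      mul_comm]
  · refine Finset.sum_congr rfl fun x hx => ?_
    have hlt : x.1 < x.2 := (Finset.mem_filter.1 hx).2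
    rw [sum_slot_single_mul_slot_single hlt.ne, sum_slot_single_mul_slot_single hlt.ne',
      swapMatrix, swapMatrix, Equiv.swap_comm, two_smul]

section Derivative

variable {𝕜 : Type*} [NontriviallyNormedField 𝕜]

lemma hasDerivAt_matrix_mul_apply {l m n : Type*} [Fintype m] {A : 𝕜 → Matrix l m 𝕜}
    {B : 𝕜 → Matrix m n 𝕜} {A' : Matrix l m 𝕜} {B' : Matrix m n 𝕜} {z : 𝕜}
    (hA : ∀ i j, HasDerivAt (fun τ => A τ i j) (A' i j) z)
    (hB : ∀ i j, HasDerivAt (fun τ => B τ i j) (B' i j) z) (i : l) (k : n) :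
    HasDerivAt (fun τ => (A τ * B τ) i k) ((A' * B z + A z * B') i k) z := by
  simp only [Matrix.add_apply, Matrix.mul_apply, ← Finset.sum_add_distrib]
  exact HasDerivAt.fun_sum fun j _ => (hA i j).mul (hB j k)

lemma hasDerivAt_kroneckerPow_apply {ι κ : Type*} [Fintype ι] [DecidableEq ι] [DecidableEq κ]
    {γ : 𝕜 → Matrix κ κ 𝕜} {X : Matrix κ κ 𝕜} {z : 𝕜} (hz : γ z = 1)
    (hγ : ∀ i j, HasDerivAt (fun τ => γ τ i j) (X i j) z) (x y : ι → κ) :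
    HasDerivAt (fun τ => kroneckerPow ι (γ τ) x y) (kroneckerSum ι X x y) z := by
  refine (HasDerivAt.fun_finsetProd fun s (_ : s ∈ Finset.univ) => hγ (x s) (y s)).congr_deriv ?_
  simp only [hz, kroneckerSum_apply, Matrix.sum_apply, slot_apply, piKronecker_mulSingle_apply,
    smul_eq_mul, mul_comm]

open scoped Matrix.Norms.Operator in
lemma hasDerivAt_exp_smul_apply {κ : Type*} [Fintype κ] [DecidableEq κ] (X : Matrix κ κ ℂ)
    (i j : κ) : HasDerivAt (fun τ : ℂ => NormedSpace.exp (τ • X) i j) (X i j) 0 := by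
  have h := hasDerivAt_exp_smul_const X (0 : ℂ)
  simp only [zero_smul, NormedSpace.exp_zero, one_mul] at h
  exact hasDerivAt_pi.1 (hasDerivAt_pi.1 h i) j

end Derivative

section Tensors

variable {N m n : ℕ}

/-- Left multiplication on mixed tensors, viewed as matrices with contravariant row multi-indices
and covariant column multi-indices. -/
def leftMul : Matrix (Fin m → Fin N) (Fin m → Fin N) ℂ →ₗ[ℂ] Module.End ℂ (Tens N m n) where
  toFun P :=
    { toFun t := of.symm (P * of t)
      map_add' := Matrix.mul_add P
      map_smul' := Matrix.mul_smul P }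
  map_add' P Q := LinearMap.ext (Matrix.add_mul P Q)
  map_smul' c P := LinearMap.ext (Matrix.smul_mul c P)

/-- Right multiplication on mixed tensors, viewed as matrices with contravariant row multi-indices
and covariant column multi-indices. -/
def rightMul : Matrix (Fin n → Fin N) (Fin n → Fin N) ℂ →ₗ[ℂ] Module.End ℂ (Tens N m n) where
  toFun P :=
    { toFun t := of.symm (of t * P)
      map_add' t u := Matrix.add_mul (of t) (of u) P
      map_smul' c t := Matrix.smul_mul c (of t) P }
  map_add' P Q := LinearMap.ext fun t => Matrix.mul_add (of t) P Q
  map_smul' c P := LinearMap.ext fun t => Matrix.mul_smul (of t) c P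

lemma leftMul_apply (P : Matrix (Fin m → Fin N) (Fin m → Fin N) ℂ) (t : Tens N m n) :
    leftMul P t = of.symm (P * of t) := rfl

lemma rightMul_apply (P : Matrix (Fin n → Fin N) (Fin n → Fin N) ℂ) (t : Tens N m n) :
    rightMul P t = of.symm (of t * P) := rfl

lemma leftMul_mul (P Q : Matrix (Fin m → Fin N) (Fin m → Fin N) ℂ) :
    (leftMul (P * Q) : Module.End ℂ (Tens N m n)) = leftMul P * leftMul Q :=
  LinearMap.ext fun t => Matrix.mul_assoc P Q (of t)

lemma rightMul_mul (P Q : Matrix (Fin n → Fin N) (Fin n → Fin N) ℂ) :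
    (rightMul (P * Q) : Module.End ℂ (Tens N m n)) = rightMul Q * rightMul P :=
  LinearMap.ext fun t => (Matrix.mul_assoc (of t) P Q).symm

lemma leftMul_one : (leftMul 1 : Module.End ℂ (Tens N m n)) = 1 :=
  LinearMap.ext fun t => Matrix.one_mul (of t)

lemma rightMul_one : (rightMul 1 : Module.End ℂ (Tens N m n)) = 1 :=
  LinearMap.ext fun t => Matrix.mul_one (of t)

lemma commute_leftMul_rightMul (P : Matrix (Fin m → Fin N) (Fin m → Fin N) ℂ)
    (Q : Matrix (Fin n → Fin N) (Fin n → Fin N) ℂ) :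
    Commute (leftMul P : Module.End ℂ (Tens N m n)) (rightMul Q) :=
  LinearMap.ext fun t => (Matrix.mul_assoc P (of t) Q).symm

lemma permU_swap (s r : Fin m) : permU N m n (Equiv.swap s r) = leftMul (swapMatrix s r) := by
  refine LinearMap.ext fun t => funext fun x => funext fun y => ?_
  simp [permU, leftMul_apply, swapMatrix, Matrix.mul_apply, Matrix.one_apply]

lemma permD_swap (s r : Fin n) : permD N m n (Equiv.swap s r) = rightMul (swapMatrix s r) := by
  have comp_swap_eq_iff (x y : Fin n → Fin N) :
      x ∘ Equiv.swap s r = y ↔ x = y ∘ Equiv.swap s r := by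
    constructor <;> rintro rfl <;> ext <;> simp
  refine LinearMap.ext fun t => funext fun x => funext fun y => ?_
  simp [permD, rightMul_apply, swapMatrix, Matrix.mul_apply, Matrix.one_apply, comp_swap_eq_iff]

lemma LOp_eq_leftMul :
    LOp N m n = leftMul (∑ x : Fin m × Fin m with x.1 < x.2, swapMatrix x.1 x.2) := by
  simp only [LOp, permU_swap, map_sum]

lemma ROp_eq_rightMul :
    ROp N m n = rightMul (∑ x : Fin n × Fin n with x.1 < x.2, swapMatrix x.1 x.2) := by
  simp only [ROp, permD_swap, map_sum]

lemma tauC_eq_sum (a : Fin m) (b : Fin n) :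
    tauC N m n a b =
      ∑ i, ∑ j, leftMul (slot a (single i j 1)) * rightMul (slot b (single j i 1)) := by
  refine LinearMap.ext fun t => funext fun x => funext fun y => ?_
  simp [tauC, leftMul_apply, rightMul_apply, LinearMap.sum_apply, Finset.sum_apply,
    slot_single_mul_apply, mul_slot_single_apply, eq_comm]

lemma A_eq_sum :
    A N m n = ∑ i, ∑ j, leftMul (kroneckerSum (Fin m) (single i j 1)) *
      rightMul (kroneckerSum (Fin n) (single j i 1)) := by
  simp only [A, tauC_eq_sum, kroneckerSum_apply, map_sum, Finset.sum_mul_sum]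
  exact sum_sum_sum_sum_comm _

lemma glAct_eq_leftMul_mul_rightMul (g : GL (Fin N) ℂ) :
    glAct N m n g = leftMul (kroneckerPow (Fin m) g) *
      rightMul (kroneckerPow (Fin n) (g⁻¹ : GL (Fin N) ℂ)) := by
  refine LinearMap.ext fun t => funext fun x => funext fun y => ?_
  simp only [glAct, LinearMap.coe_mk, AddHom.coe_mk, Module.End.mul_apply, leftMul_apply,
    rightMul_apply, Equiv.apply_symm_apply, of_symm_apply, Matrix.mul_apply, of_apply,
    kroneckerPow, piKronecker, Finset.mul_sum]
  exact Finset.sum_congr rfl fun x' _ => Finset.sum_congr rfl fun y' _ => by ring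

variable (N m n) in
/-- The derivation action of `X ∈ 𝔤𝔩_N` on mixed tensors, contragredient on the covariant
factors: the differential of `glAct`. The paper's `E^i_j` acts as the matrix `-single j i 1`. -/
def lieAct : Matrix (Fin N) (Fin N) ℂ →ₗ[ℂ] Module.End ℂ (Tens N m n) :=
  leftMul ∘ₗ kroneckerSum (Fin m) - rightMul ∘ₗ kroneckerSum (Fin n)

lemma lieAct_apply (X : Matrix (Fin N) (Fin N) ℂ) :
    lieAct N m n X = leftMul (kroneckerSum (Fin m) X) - rightMul (kroneckerSum (Fin n) X) := rfl

lemma lieAct_one : lieAct N m n 1 = ((m : ℂ) - n) • 1 := by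
  simp only [lieAct_apply, kroneckerSum_one, map_smul, leftMul_one, rightMul_one,
    Fintype.card_fin]
  module

lemma EactU_eq_neg_leftMul (i j : Fin N) (s : Fin m) :
    EactU N m n i j s = -leftMul (slot s (single j i 1)) := by
  refine LinearMap.ext fun t => funext fun x => funext fun y => ?_
  by_cases h : x s = j <;> simp [EactU, leftMul_apply, slot_single_mul_apply, h]

lemma EactD_eq_rightMul (i j : Fin N) (s : Fin n) :
    EactD N m n i j s = rightMul (slot s (single j i 1)) := by
  refine LinearMap.ext fun t => funext fun x => funext fun y => ?_
  simp [EactD, rightMul_apply, mul_slot_single_apply]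

lemma Eact_eq_neg_lieAct (i j : Fin N) : Eact N m n i j = -lieAct N m n (single j i 1) := by
  simp only [Eact, EactU_eq_neg_leftMul, EactD_eq_rightMul, Finset.sum_neg_distrib, lieAct_apply,
    kroneckerSum_apply, map_sum, neg_sub']
  abel

lemma casimir_eq_lieAct :
    casimir N m n = (2 : ℂ)⁻¹ • (∑ i, ∑ j, lieAct N m n (single i j 1) * lieAct N m n (single j i 1)
      - (N : ℂ) • lieAct N m n 1) := by
  have linear_part : ∑ i, Eact N m n i i = -lieAct N m n 1 := by
    simp only [Eact_eq_neg_lieAct, Finset.sum_neg_distrib, ← map_sum, sum_single_one]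
  have quadratic_part : ∑ i, ∑ j, Eact N m n i j * Eact N m n j i =
      ∑ i, ∑ j, lieAct N m n (single i j 1) * lieAct N m n (single j i 1) := by
    simp only [Eact_eq_neg_lieAct]
    rw [Finset.sum_comm]
    exact Finset.sum_congr rfl fun i _ => Finset.sum_congr rfl fun j _ =>
      LinearMap.ext fun t => by simp
  rw [casimir, linear_part, quadratic_part, smul_neg, ← sub_eq_add_neg]

lemma sum_lieAct_single_mul_lieAct_single :
    ∑ i, ∑ j, lieAct N m n (single i j 1) * lieAct N m n (single j i 1) =
      ((N : ℂ) * m + N * n) • 1 + (2 : ℂ) • (LOp N m n + ROp N m n - A N m n) := by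
  have mul_expand (X Y : Matrix (Fin N) (Fin N) ℂ) : lieAct N m n X * lieAct N m n Y =
      leftMul (kroneckerSum (Fin m) X * kroneckerSum (Fin m) Y)
        + rightMul (kroneckerSum (Fin n) Y * kroneckerSum (Fin n) X)
        - leftMul (kroneckerSum (Fin m) X) * rightMul (kroneckerSum (Fin n) Y)
        - leftMul (kroneckerSum (Fin m) Y) * rightMul (kroneckerSum (Fin n) X) := by
    rw [lieAct_apply, lieAct_apply, leftMul_mul, rightMul_mul, sub_mul, mul_sub, mul_sub,
      (commute_leftMul_rightMul (kroneckerSum (Fin m) Y) (kroneckerSum (Fin n) X)).eq]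
    abel
  have leftMul_part : ∑ i : Fin N, ∑ j : Fin N, (leftMul (kroneckerSum (Fin m) (single i j 1) *
      kroneckerSum (Fin m) (single j i 1)) : Module.End ℂ (Tens N m n)) =
      ((N : ℂ) * m) • 1 + (2 : ℂ) • LOp N m n := by
    simp only [← map_sum, sum_kroneckerSum_single_mul, map_add, map_smul, leftMul_one,
      LOp_eq_leftMul, Fintype.card_fin]
  have rightMul_part : ∑ i : Fin N, ∑ j : Fin N, (rightMul (kroneckerSum (Fin n) (single j i 1) *
      kroneckerSum (Fin n) (single i j 1)) : Module.End ℂ (Tens N m n)) =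
      ((N : ℂ) * n) • 1 + (2 : ℂ) • ROp N m n := by
    rw [Finset.sum_comm]
    simp only [← map_sum, sum_kroneckerSum_single_mul, map_add, map_smul, rightMul_one,
      ROp_eq_rightMul, Fintype.card_fin]
  have mixed_part : ∑ i, ∑ j, leftMul (kroneckerSum (Fin m) (single j i 1)) *
      rightMul (kroneckerSum (Fin n) (single i j 1)) = A N m n := by
    rw [Finset.sum_comm, A_eq_sum]
  simp only [mul_expand, Finset.sum_sub_distrib, Finset.sum_add_distrib, leftMul_part,
    rightMul_part, mixed_part, ← A_eq_sum]
  module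

lemma casimir_eq_LOp_add_ROp_sub_A :
    casimir N m n = LOp N m n + ROp N m n - A N m n + ((N * n : ℕ) : ℂ) • 1 := by
  rw [casimir_eq_lieAct, sum_lieAct_single_mul_lieAct_single, lieAct_one]
  push_cast
  module

lemma glAct_mul_lieAct (g : GL (Fin N) ℂ) (X : Matrix (Fin N) (Fin N) ℂ) :
    glAct N m n g * lieAct N m n X =
      lieAct N m n (g * X * (g⁻¹ : GL (Fin N) ℂ)) * glAct N m n g := by
  have left_conj : kroneckerPow (Fin m) g.1 * kroneckerSum (Fin m) X =
      kroneckerSum (Fin m) (g.1 * X * g⁻¹.1) * kroneckerPow (Fin m) g.1 :=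
    kroneckerPow_mul_kroneckerSum (Units.inv_mul_cancel_right _ g).symm
  have right_conj : kroneckerPow (Fin n) g⁻¹.1 * kroneckerSum (Fin n) (g.1 * X * g⁻¹.1) =
      kroneckerSum (Fin n) X * kroneckerPow (Fin n) g⁻¹.1 :=
    kroneckerPow_mul_kroneckerSum (by rw [mul_assoc, Units.inv_mul_cancel_left])
  rw [glAct_eq_leftMul_mul_rightMul, lieAct_apply, lieAct_apply, mul_sub, sub_mul]
  congr 1
  · rw [mul_assoc, ← (commute_leftMul_rightMul _ _).eq, ← mul_assoc, ← leftMul_mul, left_conj,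
      leftMul_mul, mul_assoc]
  · rw [mul_assoc, ← rightMul_mul, ← right_conj, rightMul_mul, ← mul_assoc,
      (commute_leftMul_rightMul _ _).eq, mul_assoc]

lemma commute_glAct_casimir (g : GL (Fin N) ℂ) : Commute (glAct N m n g) (casimir N m n) := by
  have quadratic_part : Commute (glAct N m n g)
      (∑ i, ∑ j, lieAct N m n (single i j 1) * lieAct N m n (single j i 1)) := by
    have invariance := sum_bilin_conj_single
      ((LinearMap.mul ℂ (Module.End ℂ (Tens N m n))).compl₁₂ (lieAct N m n) (lieAct N m n))
      (Units.mul_inv g)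
    simp only [LinearMap.compl₁₂_apply, LinearMap.mul_apply'] at invariance
    rw [Commute, SemiconjBy]
    nth_rw 2 [← invariance]
    simp only [Finset.mul_sum, Finset.sum_mul]
    refine Finset.sum_congr rfl fun i _ => Finset.sum_congr rfl fun j _ => ?_
    rw [← mul_assoc, glAct_mul_lieAct, mul_assoc _ (glAct N m n g), glAct_mul_lieAct, ← mul_assoc]
  rw [casimir_eq_lieAct, lieAct_one]
  exact (quadratic_part.sub_right
    (((Commute.one_right _).smul_right _).smul_right _)).smul_right _

lemma casimir_mem_Cent : casimir N m n ∈ Cent N m n := by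
  rw [Cent, Subalgebra.mem_centralizer_iff]
  rintro _ ⟨g, rfl⟩
  exact commute_glAct_casimir g

lemma hasDerivAt_glAct {γ : ℂ → GL (Fin N) ℂ} {X : Matrix (Fin N) (Fin N) ℂ} {z : ℂ} (hz : γ z = 1)
    (hγ : ∀ i j, HasDerivAt (fun τ => (γ τ : Matrix _ _ ℂ) i j) (X i j) z)
    (hγ_inv : ∀ i j, HasDerivAt (fun τ => ((γ τ)⁻¹ : GL (Fin N) ℂ).1 i j) (-X i j) z)
    (t : Tens N m n) :
    HasDerivAt (fun τ => glAct N m n (γ τ) t) (lieAct N m n X t) z := by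
  refine hasDerivAt_pi.2 fun x => hasDerivAt_pi.2 fun y => ?_
  have left_deriv := hasDerivAt_kroneckerPow_apply (ι := Fin m) (γ := fun τ => (γ τ).1)
    (by simp [hz]) hγ
  have right_deriv := hasDerivAt_kroneckerPow_apply (ι := Fin n) (γ := fun τ => (γ τ)⁻¹.1)
    (X := -X) (by simp [hz]) hγ_inv
  have mul_deriv := hasDerivAt_matrix_mul_apply left_deriv
    (hasDerivAt_matrix_mul_apply (A := fun _ => of t) (A' := 0)
      (fun i j => hasDerivAt_const z (t i j)) right_deriv) x y
  simp only [glAct_eq_leftMul_mul_rightMul]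
  refine mul_deriv.congr_deriv ?_
  simp [hz, kroneckerPow_one, lieAct_apply, leftMul_apply, rightMul_apply, sub_eq_add_neg]

lemma exists_curve_hasDerivAt_glAct (X : Matrix (Fin N) (Fin N) ℂ) :
    ∃ γ : ℂ → GL (Fin N) ℂ, ∀ t : Tens N m n,
      HasDerivAt (fun τ => glAct N m n (γ τ) t) (lieAct N m n X t) 0 := by
  refine ⟨fun τ => (Matrix.isUnit_exp (τ • X)).unit, hasDerivAt_glAct ?_ ?_ ?_⟩
  · ext1
    simp
  · exact hasDerivAt_exp_smul_apply X
  · intro i j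
    simpa [coe_units_inv, ← Matrix.exp_neg, ← smul_neg] using hasDerivAt_exp_smul_apply (-X) i j

lemma commute_lieAct_of_mem_Cent {f : Module.End ℂ (Tens N m n)} (hf : f ∈ Cent N m n)
    (X : Matrix (Fin N) (Fin N) ℂ) : Commute (lieAct N m n X) f := by
  rw [Cent, Subalgebra.mem_centralizer_iff] at hf
  obtain ⟨γ, hγ⟩ := exists_curve_hasDerivAt_glAct (m := m) (n := n) X
  refine LinearMap.ext fun t => ?_
  have deriv_comp : HasDerivAt (fun τ => f (glAct N m n (γ τ) t)) (f (lieAct N m n X t)) 0 :=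
    (LinearMap.toContinuousLinearMap f).hasFDerivAt.comp_hasDerivAt (0 : ℂ) (hγ t)
  have comp_eq : (fun τ => f (glAct N m n (γ τ) t)) = fun τ => glAct N m n (γ τ) (f t) :=
    funext fun τ => (LinearMap.congr_fun (hf _ ⟨γ τ, rfl⟩) t).symm
  exact (hγ (f t)).unique (comp_eq ▸ deriv_comp)

lemma commute_casimir_of_mem_Cent {f : Module.End ℂ (Tens N m n)} (hf : f ∈ Cent N m n) :
    Commute (casimir N m n) f := by
  have commute_lieAct := commute_lieAct_of_mem_Cent hf
  rw [casimir_eq_lieAct]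
  exact ((Commute.sum_left _ _ _ fun i _ => Commute.sum_left _ _ _ fun j _ =>
    (commute_lieAct _).mul_left (commute_lieAct _)).sub_left
      ((commute_lieAct 1).smul_left _)).smul_left _

end Tensors

end Mixed

/-- 𝒞_{m,n} = ℒ_m + ℛ_n − 𝒜_{m,n} + N·n coincides with the action
of the Casimir element (1/2)(Eⁱ_j Eʲ_i + N Eⁱ_i) of U(𝔤𝔩_N) on V^{m,n}; in
particular it lies in the centre of the centraliser algebra C_{m,n}(N). -/
theorem casimir_eq_C (N m n : ℕ) (hm : 1 ≤ m) (hn : 1 ≤ n) :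
    Mixed.casimir N m n =
      Mixed.LOp N m n + Mixed.ROp N m n - Mixed.A N m n
        + ((N * n : ℕ) : ℂ) • (1 : Module.End ℂ (Tens N m n)) ∧
    Mixed.casimir N m n ∈ Mixed.Cent N m n ∧
    ∀ f ∈ Mixed.Cent N m n,
      Mixed.casimir N m n * f = f * Mixed.casimir N m n :=
  ⟨Mixed.casimir_eq_LOp_add_ROp_sub_A, Mixed.casimir_mem_Cent,
    fun _ hf => Mixed.commute_casimir_of_mem_Cent hf⟩
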